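/- arXiv:1209.4945 — 2 statements merged into one kernel-verified Lean document; each statement's English description precedes it below -/
import Mathlib

section
/- For every n ≥ 0, the parabolic embedding i_n : ℂ[GL(n,q)] → ℂ[GL(n+1,q)], defined by i_n(e_g) = (1/((q−1)q^n))·Σ_{h ∈ Ext(g)} e_h, is an injective homomorphism of (non-unital) ℂ-algebras: it is linear, injective, and satisfies i_n(a·b) = i_n(a)·i_n(b) for all a, b ∈ ℂ[GL(n,q)]. (The key fact underlying Proposition 2.6, realizing A(GLB) as an inductive limit of the group algebras ℂ[GL(n,q)].) -/
/-!
STATEMENT 3: the parabolic embedding `i_n : ℂ[GL(n,q)] → ℂ[GL(n+1,q)]` is an injective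
homomorphism of (non-unital) ℂ-algebras (the key fact underlying Proposition 2.6).
-/

variable (F : Type) [Field F] [Fintype F] [DecidableEq F]

/-- `GL(n,q)`, the group of invertible `n × n` matrices over the finite field `F` (`q = |F|`). -/
abbrev GLn (n : ℕ) := GL (Fin n) F

/-- The complex group algebra `ℂ[GL(n,q)]`. -/
abbrev GA (n : ℕ) := MonoidAlgebra ℂ (GLn F n)

open scoped Classical in
/-- `Ext(g)`: the set of `h ∈ GL(n+1,q)` whose top-left `n × n` corner is `g` and whose last
row vanishes except possibly at the `(n+1,n+1)` entry. -/
noncomputable def ExtSet {n : ℕ} (g : GLn F n) : Finset (GLn F (n + 1)) :=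
  Finset.univ.filter (fun h =>
    (∀ i j : Fin n, (h : Matrix (Fin (n + 1)) (Fin (n + 1)) F) i.castSucc j.castSucc
        = (g : Matrix (Fin n) (Fin n) F) i j) ∧
    (∀ j : Fin n, (h : Matrix (Fin (n + 1)) (Fin (n + 1)) F) (Fin.last n) j.castSucc = 0))

/-- The parabolic embedding `i_n : ℂ[GL(n,q)] → ℂ[GL(n+1,q)]`,
`e_g ↦ (1/((q-1)q^n)) ∑_{h ∈ Ext(g)} e_h`, as a linear map. -/
noncomputable def paraEmb (n : ℕ) : GA F n →ₗ[ℂ] GA F (n + 1) :=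
  (Finsupp.lsum ℂ (fun g => LinearMap.toSpanSingleton ℂ (GA F (n + 1))
    ((((Fintype.card F : ℂ) - 1) * (Fintype.card F : ℂ) ^ n)⁻¹ •
      ∑ h ∈ ExtSet F g, MonoidAlgebra.single h (1 : ℂ)))) ∘ₗ
    (MonoidAlgebra.coeffLinearEquiv ℂ).toLinearMap

/-!
`i_n(e_g)` is the uniform probability distribution on `Ext(g)`. The sets `Ext(g)` are the fibres of
the projection of a parabolic subgroup onto `GL(n,q)`. Hence they are pairwise disjoint, which makes
the `i_n(e_g)` linearly independent, and left translation by any `h ∈ Ext(g)` carries `Ext(g')` into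
`Ext(gg')`, hence onto it by counting. So `e_h * i_n(e_g') = i_n(e_gg')` for every such `h`, and
averaging over `h` gives multiplicativity.
-/

section UniformElement

variable (k : Type*) {G H : Type*}

/-- The uniform probability distribution on a finite set `s`, as the element
`(#s)⁻¹ • ∑ h ∈ s, e_h` of the monoid algebra; it is `0` if `#s` vanishes in `k`. The parabolic
embedding sends `e_g` to the uniform element of `Ext(g)`. -/
noncomputable def uniformElement [DivisionSemiring k] (s : Finset H) : MonoidAlgebra k H :=
  (s.card : k)⁻¹ • ∑ h ∈ s, MonoidAlgebra.single h 1

theorem coeff_uniformElement [DivisionSemiring k] [DecidableEq H] (s : Finset H) (h : H) :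
    (uniformElement k s).coeff h = if h ∈ s then (s.card : k)⁻¹ else 0 := by
  simp [uniformElement, MonoidAlgebra.coeff_sum, Finsupp.single_apply]

theorem single_mul_uniformElement [Semifield k] [Mul H] [IsLeftCancelMul H] (h : H)
    (t : Finset H) :
    MonoidAlgebra.single h 1 * uniformElement k t =
      uniformElement k (t.map (mulLeftEmbedding h)) := by
  simp [uniformElement, mul_smul_comm, Finset.mul_sum]

variable {k}

theorem uniformElement_mul_uniformElement [Semifield k] [Mul H] [IsLeftCancelMul H]
    {s t u : Finset H} (hs : (s.card : k) ≠ 0) (hmul : ∀ h ∈ s, ∀ h' ∈ t, h * h' ∈ u)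
    (hcard : u.card = t.card) :
    uniformElement k s * uniformElement k t = uniformElement k u := by
  have translate_eq : ∀ h ∈ s, t.map (mulLeftEmbedding h) = u := fun h hh ↦
    Finset.eq_of_subset_of_card_le
      (by simpa [Finset.map_subset_iff_subset_preimage, Finset.subset_iff] using hmul h hh)
      (by rw [Finset.card_map, hcard])
  calc uniformElement k s * uniformElement k t
      = (s.card : k)⁻¹ • ∑ h ∈ s, MonoidAlgebra.single h 1 * uniformElement k t := by
        rw [uniformElement, smul_mul_assoc, Finset.sum_mul]
    _ = (s.card : k)⁻¹ • ∑ _h ∈ s, uniformElement k u := by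
        congr 1
        refine Finset.sum_congr rfl fun h hh ↦ ?_
        rw [single_mul_uniformElement, translate_eq h hh]
    _ = uniformElement k u := by
        rw [Finset.sum_const, ← Nat.cast_smul_eq_nsmul k, inv_smul_smul₀ hs]

theorem linearIndependent_uniformElement [DivisionRing k] {E : G → Finset H}
    (hdisj : Pairwise (Function.onFun Disjoint E)) (hcard : ∀ g, ((E g).card : k) ≠ 0) :
    LinearIndependent k fun g ↦ uniformElement k (E g) := by
  classical
  let mass (g : G) : Module.Dual k (MonoidAlgebra k H) :=
    ∑ h ∈ E g, Finsupp.lapply h ∘ₗ (MonoidAlgebra.coeffLinearEquiv k).toLinearMap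
  have mass_uniform (g g' : G) : mass g (uniformElement k (E g')) =
      ∑ h ∈ E g, if h ∈ E g' then ((E g').card : k)⁻¹ else 0 := by
    simp [mass, coeff_uniformElement]
  refine .of_pairwise_dual_eq_zero_one _ mass (fun g g' hne ↦ ?_) fun g ↦ ?_
  · exact (mass_uniform g g').trans <| Finset.sum_eq_zero fun h hh ↦
      if_neg (Finset.disjoint_left.1 (hdisj hne) hh)
  · rw [mass_uniform, Finset.sum_congr rfl fun h hh ↦ if_pos hh, Finset.sum_const, nsmul_eq_mul,
      mul_inv_cancel₀ (hcard g)]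

end UniformElement

section LiftMagma

variable {R M A : Type*} [Semiring R] [Mul M] [NonUnitalNonAssocSemiring A] [Module R A]
  [IsScalarTower R A A] [SMulCommClass R A A] {f : M →ₙ* A}

theorem liftMagma_eq_linearCombination (a : MonoidAlgebra R M) :
    MonoidAlgebra.liftMagma R f a = Finsupp.linearCombination R f a.coeff := by
  simp [Finsupp.linearCombination_apply, Finsupp.sum]

theorem liftMagma_injective (hf : LinearIndependent R f) :
    Function.Injective (MonoidAlgebra.liftMagma R f) := by
  intro a b hab
  rw [liftMagma_eq_linearCombination, liftMagma_eq_linearCombination] at hab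
  exact (MonoidAlgebra.coeffLinearEquiv R).injective (hf hab)

end LiftMagma

section BlockExtension

variable {R m n : Type*} [CommRing R] [Fintype m] [Fintype n] [DecidableEq m] [DecidableEq n]

variable (n) in
/-- The block upper triangular matrices in `GL (m ⊕ n) R` with upper left block `A`, i.e. the
analogue of `Ext(g)` for a lower right block of arbitrary size. -/
def blockExtensions (A : GL m R) : Set (GL (m ⊕ n) R) :=
  {h | h.val.toBlocks₁₁ = A ∧ h.val.toBlocks₂₁ = 0}

theorem mul_mem_blockExtensions {A A' : GL m R} {h h' : GL (m ⊕ n) R}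
    (hh : h ∈ blockExtensions n A) (hh' : h' ∈ blockExtensions n A') :
    h * h' ∈ blockExtensions n (A * A') := by
  have blocks_mul : (h * h').val = Matrix.fromBlocks
      (A.val * A'.val) (A.val * h'.val.toBlocks₁₂ + h.val.toBlocks₁₂ * h'.val.toBlocks₂₂)
      0 (h.val.toBlocks₂₂ * h'.val.toBlocks₂₂) := by
    rw [Units.val_mul, ← Matrix.fromBlocks_toBlocks h.val, ← Matrix.fromBlocks_toBlocks h'.val,
      hh.1, hh.2, hh'.1, hh'.2, Matrix.fromBlocks_multiply]
    simp
  simp [blockExtensions, blocks_mul]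

theorem pairwise_disjoint_blockExtensions :
    Pairwise (Function.onFun Disjoint (blockExtensions n : GL m R → Set (GL (m ⊕ n) R))) :=
  fun _ _ hne ↦ Set.disjoint_left.2 fun _ hh hh' ↦ hne (Units.ext (hh.1.symm.trans hh'.1))

theorem isUnit_toBlocks₂₂_of_mem_blockExtensions {A : GL m R} {h : GL (m ⊕ n) R}
    (hh : h ∈ blockExtensions n A) : IsUnit h.val.toBlocks₂₂ := by
  have isUnit_blocks := h.isUnit
  rw [← Matrix.fromBlocks_toBlocks h.val, hh.2, Matrix.isUnit_fromBlocks_zero₂₁] at isUnit_blocks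
  exact isUnit_blocks.2

/-- A block extension of `A` amounts to an arbitrary upper right block and an invertible lower
right block. -/
noncomputable def blockExtensionsEquiv (A : GL m R) :
    blockExtensions n A ≃ Matrix m n R × GL n R where
  toFun h := (h.1.val.toBlocks₁₂, (isUnit_toBlocks₂₂_of_mem_blockExtensions h.2).unit)
  invFun p := ⟨(Matrix.isUnit_fromBlocks_zero₂₁ (B := p.1).2 ⟨A.isUnit, p.2.isUnit⟩).unit, by
    simp [blockExtensions]⟩
  left_inv h := by
    refine Subtype.ext (Units.ext ?_)
    conv_rhs => rw [← Matrix.fromBlocks_toBlocks h.1.val, h.2.1, h.2.2]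
    rfl
  right_inv p := Prod.ext (by simp) (Units.ext (by simp))

theorem natCard_blockExtensions (A : GL m R) :
    Nat.card (blockExtensions n A) = Nat.card (Matrix m n R) * Nat.card (GL n R) := by
  rw [Nat.card_congr (blockExtensionsEquiv A), Nat.card_prod]

end BlockExtension

/-- The isomorphism splitting off the last coordinate, so that the last row and column become
blocks. -/
noncomputable def splitLast {R : Type*} [CommRing R] {n : ℕ} :
    GL (Fin (n + 1)) R ≃* GL (Fin n ⊕ Fin 1) R :=
  Units.mapEquiv (Matrix.reindexAlgEquiv R R finSumFinEquiv.symm).toMulEquiv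

section ParabolicEmbedding

variable {F} {n : ℕ}

theorem mem_ExtSet_iff_splitLast_mem {g : GLn F n} {h : GLn F (n + 1)} :
    h ∈ ExtSet F g ↔ splitLast h ∈ blockExtensions (Fin 1) g := by
  have castAdd_eq (i : Fin n) : Fin.castAdd 1 i = i.castSucc := rfl
  have natAdd_eq : Fin.natAdd n (0 : Fin 1) = Fin.last n := rfl
  simp [ExtSet, splitLast, blockExtensions, ← Matrix.ext_iff, Matrix.toBlocks₁₁,
    Matrix.toBlocks₂₁, castAdd_eq, natAdd_eq]

theorem mul_mem_ExtSet {g g' : GLn F n} {h h' : GLn F (n + 1)} (hh : h ∈ ExtSet F g)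
    (hh' : h' ∈ ExtSet F g') : h * h' ∈ ExtSet F (g * g') := by
  rw [mem_ExtSet_iff_splitLast_mem] at hh hh' ⊢
  rw [map_mul]
  exact mul_mem_blockExtensions hh hh'

theorem pairwise_disjoint_ExtSet : Pairwise (Function.onFun Disjoint (ExtSet F (n := n))) :=
  fun _ _ hne ↦ Finset.disjoint_left.2 fun _ hh hh' ↦
    Set.disjoint_left.1 (pairwise_disjoint_blockExtensions hne)
      (mem_ExtSet_iff_splitLast_mem.1 hh) (mem_ExtSet_iff_splitLast_mem.1 hh')

theorem card_ExtSet (g : GLn F n) :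
    (ExtSet F g).card = (Fintype.card F - 1) * Fintype.card F ^ n := by
  calc (ExtSet F g).card = Nat.card (blockExtensions (Fin 1) g) := by
        rw [← Nat.card_eq_finsetCard]
        exact Nat.card_congr
          (splitLast.toEquiv.subtypeEquiv fun _ ↦ mem_ExtSet_iff_splitLast_mem)
    _ = (Fintype.card F - 1) * Fintype.card F ^ n := by
        rw [natCard_blockExtensions, Matrix.card_GL_field, mul_comm]
        simp [Matrix]

theorem cast_card_ExtSet (g : GLn F n) :
    ((ExtSet F g).card : ℂ) = ((Fintype.card F : ℂ) - 1) * (Fintype.card F : ℂ) ^ n := by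
  rw [card_ExtSet]
  push_cast [Nat.cast_sub Fintype.card_pos]
  simp

theorem cast_card_ExtSet_ne_zero (g : GLn F n) : ((ExtSet F g).card : ℂ) ≠ 0 := by
  rw [card_ExtSet, Nat.cast_ne_zero]
  exact mul_ne_zero (Nat.sub_ne_zero_of_lt Fintype.one_lt_card)
    (pow_ne_zero n Fintype.card_ne_zero)

variable (F n)

/-- The map `g ↦ i_n(e_g)`, as a homomorphism of multiplicative structures; in general it does
not send `1` to `1`. -/
noncomputable def uniformExt : GLn F n →ₙ* GA F (n + 1) where
  toFun g := uniformElement ℂ (ExtSet F g)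
  map_mul' g g' := .symm <| uniformElement_mul_uniformElement (cast_card_ExtSet_ne_zero g)
    (fun _ hh _ hh' ↦ mul_mem_ExtSet hh hh') (by rw [card_ExtSet, card_ExtSet])

theorem linearIndependent_uniformExt : LinearIndependent ℂ (uniformExt F n) :=
  linearIndependent_uniformElement pairwise_disjoint_ExtSet cast_card_ExtSet_ne_zero

theorem paraEmb_eq_liftMagma (a : GA F n) :
    paraEmb F n a = MonoidAlgebra.liftMagma ℂ (uniformExt F n) a := by
  rw [liftMagma_eq_linearCombination]
  simp [paraEmb, uniformExt, uniformElement, cast_card_ExtSet, Finsupp.linearCombination_apply,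
    Finsupp.sum]

end ParabolicEmbedding

/-- **The parabolic embedding is an injective (non-unital) algebra homomorphism**: the linear
map `i_n` is injective and multiplicative. -/
theorem paraEmb_injective_and_multiplicative (n : ℕ) :
    Function.Injective (paraEmb F n) ∧
    ∀ a b : GA F n, paraEmb F n (a * b) = paraEmb F n a * paraEmb F n b := by
  rw [funext (paraEmb_eq_liftMagma F n)]
  exact ⟨liftMagma_injective (linearIndependent_uniformExt F n), map_mul _⟩
end

section
/- For every permutation ω ∈ S_n, the parabolic embedding satisfies i_n(s_ω) = s_{ω'}, where ω' ∈ S_{n+1} is the permutation fixing n+1 and agreeing with ω on {1,...,n}, and s_ω ∈ ℂ[GL(n,q)], s_{ω'} ∈ ℂ[GL(n+1,q)] are the corresponding Hecke basis elements. In particular, i_n maps H_q(n) into H_q(n+1), and its restriction to H_q(n) is a unital algebra embedding of Iwahori–Hecke algebras sending s_e to s_e and s_{(i,i+1)} to s_{(i,i+1)} for 1 ≤ i ≤ n−1. (Proposition 2.17: the parabolic embeddings restrict to the standard embeddings of Hecke algebras.) -/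
variable (F : Type) [Field F] [Fintype F] [DecidableEq F]

/-- `b` is an invertible upper-triangular matrix, i.e. an element of the Borel subgroup `B_n`. -/
def IsUT {n : ℕ} (b : GLn F n) : Prop :=
  ∀ i j : Fin n, j < i → (b : Matrix (Fin n) (Fin n) F) i j = 0

/-- The permutation matrix of `ω ∈ S_n`, as an element of `GL(n,q)`. -/
noncomputable def permGL {n : ℕ} (ω : Equiv.Perm (Fin n)) : GLn F n :=
  Matrix.GeneralLinearGroup.mkOfDetNeZero (ω.permMatrix F) (by
    rw [Matrix.det_permutation]
    rcases Int.units_eq_one_or (Equiv.Perm.sign ω) with h | h <;> simp [h])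

open scoped Classical in
/-- The Hecke basis element `s_ω = (1/|B_n|) ∑_{g ∈ B_n ω B_n} e_g ∈ ℂ[GL(n,q)]`. -/
noncomputable def heckeS {n : ℕ} (ω : Equiv.Perm (Fin n)) : GA F n :=
  ((Finset.univ.filter (fun b : GLn F n => IsUT F b)).card : ℂ)⁻¹ •
    ∑ g ∈ Finset.univ.filter
        (fun g : GLn F n => ∃ b₁ b₂ : GLn F n, IsUT F b₁ ∧ IsUT F b₂ ∧ g = b₁ * permGL F ω * b₂),
      MonoidAlgebra.single g (1 : ℂ)

/-- The Iwahori–Hecke algebra `H_q(n)`: the set of `B_n`-biinvariant elements of `ℂ[GL(n,q)]`. -/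
def heckeSet (n : ℕ) : Set (GA F n) :=
  {a | ∀ b₁ b₂ g : GLn F n, IsUT F b₁ → IsUT F b₂ → a.coeff (b₁ * g * b₂) = a.coeff g}

/-!
The matrices in `GL(n+1,q)` whose last row is zero off the diagonal form a subgroup `P`, and taking
the top-left corner is a surjective homomorphism `π : P → GL(n,q)` with kernel of order
`(q-1)q^n`. Since `Ext(g) = π⁻¹(g)`, the parabolic embedding is inflation along `π`, which averages
over the fibres of `π`, followed by the inclusion `ℂ[P] ⊆ ℂ[GL(n+1,q)]`. Both maps are
multiplicative and injective. Moreover `B_{n+1} = π⁻¹(B_n)`, so biinvariance pulls back along `π`,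
the preimage of `B_n ω B_n` is `B_{n+1} ω' B_{n+1}`, and `|B_{n+1}| = |ker π| |B_n|` accounts for
the normalisations of `s_ω` and `s_{ω'}`.
-/

section Inflation

variable {P H : Type*} [Group P] [Group H] {π : P →* H}

lemma card_preimage_of_surjective (hπ : Function.Surjective π) (S : Set H) :
    Nat.card (π ⁻¹' S) = Nat.card π.ker * Nat.card S := by
  let e := QuotientGroup.quotientKerEquivOfSurjective π hπ
  have preimage_eq : π ⁻¹' S = QuotientGroup.mk ⁻¹' (e ⁻¹' S) := rfl
  rw [preimage_eq, Nat.card_congr (QuotientGroup.preimageMkEquivSubgroupProdSet _ _),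
    Nat.card_prod, Nat.card_preimage_of_injective e.injective (by simp [e.surjective.range_eq])]

lemma sum_comp_of_surjective {M : Type*} [AddCommMonoid M] [Fintype P] [Fintype H]
    (hπ : Function.Surjective π) (f : H → M) :
    ∑ p, f (π p) = Nat.card π.ker • ∑ h, f h := by
  classical
  have card_fiber (h : H) : (Finset.univ.filter (π · = h)).card = Nat.card π.ker := by
    simpa [Nat.card_eq_fintype_card, Fintype.card_subtype] using
      card_preimage_of_surjective hπ {h}
  simp [← Finset.sum_fiberwise' Finset.univ π f, card_fiber, Finset.smul_sum]

lemma preimage_doubleCoset (hπ : Function.Surjective π) (p : P) (S T : Set H) :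
    π ⁻¹' DoubleCoset.doubleCoset (π p) S T =
      DoubleCoset.doubleCoset p (π ⁻¹' S) (π ⁻¹' T) := by
  ext q
  simp only [Set.mem_preimage, DoubleCoset.mem_doubleCoset]
  constructor
  · rintro ⟨s, hs, t, ht, hq⟩
    obtain ⟨t, rfl⟩ := hπ t
    exact ⟨q * t⁻¹ * p⁻¹, by simpa [hq] using hs, t, ht, by group⟩
  · rintro ⟨s, hs, t, ht, rfl⟩
    exact ⟨π s, hs, π t, ht, by simp⟩

lemma image_doubleCoset (f : P →* H) (p : P) (S T : Set P) :
    f '' DoubleCoset.doubleCoset p S T = DoubleCoset.doubleCoset (f p) (f '' S) (f '' T) := by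
  simp only [DoubleCoset.doubleCoset, Set.image_mul, Set.image_singleton]

variable {k : Type*} [Field k] [Finite P]

variable (k) in
/-- Inflation of group algebra elements along `π : P →* H`: the linear map sending a basis element
`e_h` to the average `|ker π|⁻¹ ∑_{π p = h} e_p` over the fibre. -/
noncomputable def inflation (π : P →* H) : MonoidAlgebra k H →ₗ[k] MonoidAlgebra k P where
  toFun a := .ofCoeff <| Finsupp.equivFunOnFinite.symm fun p =>
    (Nat.card π.ker : k)⁻¹ * a.coeff (π p)
  map_add' a b := by ext; simp [mul_add]
  map_smul' c a := by ext; simp [mul_left_comm]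

@[simp]
lemma coeff_inflation (π : P →* H) (a : MonoidAlgebra k H) (p : P) :
    (inflation k π a).coeff p = (Nat.card π.ker : k)⁻¹ * a.coeff (π p) := rfl

variable [NeZero (Nat.card π.ker : k)]

lemma inflation_injective (hπ : Function.Surjective π) :
    Function.Injective (inflation k π) := by
  intro a b hab
  ext h
  obtain ⟨p, rfl⟩ := hπ h
  exact mul_left_cancel₀ (inv_ne_zero (NeZero.ne (Nat.card π.ker : k))) (congrArg (·.coeff p) hab)

lemma inflation_mul (hπ : Function.Surjective π) (a b : MonoidAlgebra k H) :
    inflation k π (a * b) = inflation k π a * inflation k π b := by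
  classical
  have := Fintype.ofFinite P
  have := Fintype.ofSurjective π hπ
  ext x
  set c : k := (Nat.card π.ker : k)
  calc
    (inflation k π (a * b)).coeff x = c⁻¹ * ∑ h, a.coeff h * b.coeff (h⁻¹ * π x) := by
      simp [c, MonoidAlgebra.coeff_mul_apply_left, Finsupp.sum_fintype]
    _ = c⁻¹ * c⁻¹ * (c * ∑ h, a.coeff h * b.coeff (h⁻¹ * π x)) := by
      field_simp [NeZero.ne c]
    _ = c⁻¹ * c⁻¹ * ∑ p, a.coeff (π p) * b.coeff ((π p)⁻¹ * π x) := by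
      rw [sum_comp_of_surjective hπ fun h => a.coeff h * b.coeff (h⁻¹ * π x), nsmul_eq_mul]
    _ = (inflation k π a * inflation k π b).coeff x := by
      simp [MonoidAlgebra.coeff_mul_apply_left, Finsupp.sum_fintype, Finset.mul_sum, c,
        mul_assoc, mul_left_comm]

end Inflation

section SetSum

variable {k G P H : Type*}

variable (k) in
/-- The sum `∑_{g ∈ S} e_g` of a set `S` of elements of a finite group, in the group algebra. -/
noncomputable def setSum [Semiring k] [Finite G] (S : Set G) : MonoidAlgebra k G :=
  .ofCoeff <| Finsupp.equivFunOnFinite.symm <| S.indicator 1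

@[simp]
lemma coeff_setSum [Semiring k] [Finite G] (S : Set G) (g : G) :
    (setSum k S).coeff g = S.indicator 1 g := rfl

lemma setSum_coe_finset [Semiring k] [Finite G] (S : Finset G) :
    setSum k (S : Set G) = ∑ g ∈ S, MonoidAlgebra.single g 1 := by
  classical
  ext g
  simp [Set.indicator_apply, Finsupp.single_apply]

lemma setSum_singleton [Semiring k] [Finite G] (g : G) :
    setSum k {g} = MonoidAlgebra.single g 1 := by
  simpa using setSum_coe_finset (k := k) {g}

lemma mapDomain_setSum [Semiring k] [Finite P] [Finite G] {f : P → G}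
    (hf : Function.Injective f) (S : Set P) :
    MonoidAlgebra.mapDomain f (setSum k S) = setSum k (f '' S) := by
  ext g
  by_cases hg : g ∈ Set.range f
  · obtain ⟨p, rfl⟩ := hg
    simp [Finsupp.mapDomain_apply hf, Set.indicator_image hf, Pi.one_comp]
  · have hgS : g ∉ f '' S := fun h => hg (Set.image_subset_range f S h)
    simp [Finsupp.mapDomain_of_notMem_range _ _ hg, hgS]

lemma inflation_setSum [Field k] [Group P] [Finite P] [Group H] [Finite H] (π : P →* H)
    (S : Set H) : inflation k π (setSum k S) = (Nat.card π.ker : k)⁻¹ • setSum k (π ⁻¹' S) := by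
  ext p
  rfl

end SetSum

section Biinvariant

variable {k P G H : Type*} [Group P] [Group G] [Group H]

/-- `S`-biinvariance of an element of the group algebra: its coefficients do not change under
left and right translation by elements of `S`. -/
def IsBiinvariant [Semiring k] (S : Set G) (a : MonoidAlgebra k G) : Prop :=
  ∀ ⦃b₁⦄, b₁ ∈ S → ∀ ⦃b₂⦄, b₂ ∈ S → ∀ g, a.coeff (b₁ * g * b₂) = a.coeff g

namespace IsBiinvariant

lemma inflation [Field k] [Finite P] {S : Set H} {a : MonoidAlgebra k H}
    (ha : IsBiinvariant S a) (π : P →* H) : IsBiinvariant (π ⁻¹' S) (inflation k π a) := by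
  intro b₁ hb₁ b₂ hb₂ p
  simp [ha hb₁ hb₂]

lemma mapDomain [Semiring k] {S : Set P} {a : MonoidAlgebra k P} (ha : IsBiinvariant S a)
    {f : P →* G} (hf : Function.Injective f) :
    IsBiinvariant (f '' S) (MonoidAlgebra.mapDomain f a) := by
  rintro _ ⟨b₁, hb₁, rfl⟩ _ ⟨b₂, hb₂, rfl⟩ g
  have mem_range_iff : f b₁ * g * f b₂ ∈ f.range ↔ g ∈ f.range := by
    rw [mul_mem_cancel_right (f.mem_range.2 ⟨b₂, rfl⟩),
      mul_mem_cancel_left (f.mem_range.2 ⟨b₁, rfl⟩)]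
  by_cases hg : g ∈ f.range
  · obtain ⟨p, rfl⟩ := hg
    simp [← map_mul, Finsupp.mapDomain_apply hf, ha hb₁ hb₂]
  · simp only [MonoidAlgebra.coeff_mapDomain]
    rw [Finsupp.mapDomain_of_notMem_range _ _ hg,
      Finsupp.mapDomain_of_notMem_range _ _ (mem_range_iff.not.2 hg)]

end IsBiinvariant

end Biinvariant

section Parabolic

variable {R : Type*} [CommRing R] {n : ℕ}

variable (R n) in
/-- The parabolic subgroup of `GL(n+1, R)` of matrices whose last row vanishes off the diagonal,
encoded as block triangularity for the partition of the indices into `{0, …, n-1}` and `{n}`. -/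
def parabolic : Subgroup (GL (Fin (n + 1)) R) where
  carrier := {h | h.val.BlockTriangular fun i => decide (i = Fin.last n)}
  one_mem' := Matrix.blockTriangular_one
  mul_mem' := Matrix.BlockTriangular.mul
  inv_mem' {h} hh := by
    have := h.invertible
    simpa only [Set.mem_ofPred_eq, Matrix.coe_units_inv] using
      Matrix.blockTriangular_inv_of_blockTriangular hh

lemma mem_parabolic {h : GL (Fin (n + 1)) R} :
    h ∈ parabolic R n ↔ ∀ j : Fin n, h.val (Fin.last n) j.castSucc = 0 := by
  change Matrix.BlockTriangular _ _ ↔ _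
  simp [Matrix.BlockTriangular, Fin.forall_fin_succ', Bool.lt_iff]

@[simp]
lemma parabolic_last_castSucc (p : parabolic R n) (j : Fin n) :
    p.1.val (Fin.last n) j.castSucc = 0 := mem_parabolic.1 p.2 j

variable (R n) in
/-- The homomorphism from the parabolic subgroup to its Levi factor `GL(n, R)`, given by the
top-left `n × n` corner. -/
def corner : parabolic R n →* GL (Fin n) R :=
  MonoidHom.toHomUnits
    { toFun p := p.1.val.submatrix Fin.castSucc Fin.castSucc
      map_one' := by ext; simp [Matrix.one_apply]
      map_mul' p p' := by ext; simp [Matrix.mul_apply, Fin.sum_univ_castSucc] }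

@[simp]
lemma corner_apply (p : parabolic R n) (i j : Fin n) :
    (corner R n p).val i j = p.1.val i.castSucc j.castSucc := rfl

/-- The homomorphism from the parabolic subgroup to its Levi factor `GL(1, R) = Rˣ`, given by the
bottom-right entry. -/
def lastEntry : parabolic R n →* Rˣ :=
  MonoidHom.toHomUnits
    { toFun p := p.1.val (Fin.last n) (Fin.last n)
      map_one' := by simp
      map_mul' p p' := by simp [Matrix.mul_apply, Fin.sum_univ_castSucc] }

@[simp]
lemma lastEntry_apply (p : parabolic R n) :
    (lastEntry p).val = p.1.val (Fin.last n) (Fin.last n) := rfl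

/-- The block matrix `[A, v; 0, d]` with an `n × n` block `A`, a column `v` and a scalar `d`. -/
def borderedMatrix (A : Matrix (Fin n) (Fin n) R) (v : Fin n → R) (d : R) :
    Matrix (Fin (n + 1)) (Fin (n + 1)) R :=
  .of <| Fin.snoc (fun i => Fin.snoc (A i) (v i)) (Fin.snoc 0 d)

section BorderedMatrix

variable (A : Matrix (Fin n) (Fin n) R) (v : Fin n → R) (d : R) (i j : Fin n)

@[simp]
lemma borderedMatrix_castSucc_castSucc : borderedMatrix A v d i.castSucc j.castSucc = A i j := by
  simp [borderedMatrix]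

@[simp]
lemma borderedMatrix_castSucc_last : borderedMatrix A v d i.castSucc (Fin.last n) = v i := by
  simp [borderedMatrix]

@[simp]
lemma borderedMatrix_last_castSucc : borderedMatrix A v d (Fin.last n) j.castSucc = 0 := by
  simp [borderedMatrix]

@[simp]
lemma borderedMatrix_last_last : borderedMatrix A v d (Fin.last n) (Fin.last n) = d := by
  simp [borderedMatrix]

lemma det_borderedMatrix : (borderedMatrix A v d).det = d * A.det := by
  have corner_eq : (borderedMatrix A v d).submatrix Fin.castSucc Fin.castSucc = A := by
    ext i j
    simp
  simp [Matrix.det_succ_row _ (Fin.last n), Fin.sum_univ_castSucc, corner_eq]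

end BorderedMatrix

/-- The element `[g, v; 0, d]` of the parabolic subgroup. -/
noncomputable def bordered (g : GL (Fin n) R) (v : Fin n → R) (d : Rˣ) : parabolic R n :=
  ⟨.mk'' (borderedMatrix g.val v d) (by
    rw [det_borderedMatrix]
    exact d.isUnit.mul (Matrix.isUnits_det_units g)),
    mem_parabolic.2 (borderedMatrix_last_castSucc g.val v d)⟩

@[simp]
lemma coe_bordered (g : GL (Fin n) R) (v : Fin n → R) (d : Rˣ) :
    (bordered g v d).1.val = borderedMatrix g.val v d := rfl

@[simp]
lemma corner_bordered (g : GL (Fin n) R) (v : Fin n → R) (d : Rˣ) :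
    corner R n (bordered g v d) = g := by
  ext i j
  simp

lemma corner_surjective : Function.Surjective (corner R n) :=
  fun g => ⟨bordered g 0 1, corner_bordered g 0 1⟩

/-- The parametrisation of the kernel of `corner` by the last column: its matrices are the
`[1, v; 0, d]`. -/
noncomputable def kerCornerEquiv : (corner R n).ker ≃ (Fin n → R) × Rˣ where
  toFun p := (fun i => p.1.1.val i.castSucc (Fin.last n), lastEntry p.1)
  invFun x := ⟨bordered 1 x.1 x.2, corner_bordered 1 x.1 x.2⟩
  left_inv p := by
    have corner_eq : corner R n p.1 = 1 := p.2
    ext i j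
    induction i using Fin.lastCases <;> induction j using Fin.lastCases <;>
      simp [← corner_eq]
  right_inv x := by ext <;> simp

lemma card_ker_corner : Nat.card (corner R n).ker = Nat.card R ^ n * Nat.card Rˣ := by
  rw [Nat.card_congr kerCornerEquiv, Nat.card_prod, Nat.card_fun, Nat.card_fin]

end Parabolic

section Borel

omit [Fintype F] [DecidableEq F]

/-- The Borel subgroup `B_n ⊆ GL(n,q)`, as a set. -/
def upperTriangular (n : ℕ) : Set (GLn F n) := {b | IsUT F b}

lemma upperTriangular_succ (n : ℕ) : upperTriangular F (n + 1) =
    (parabolic F n).subtype '' (corner F n ⁻¹' upperTriangular F n) := by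
  ext b
  constructor
  · intro hb
    refine ⟨⟨b, mem_parabolic.2 fun j => hb _ _ j.castSucc_lt_last⟩, fun i j hij => ?_, rfl⟩
    exact hb _ _ (Fin.castSucc_lt_castSucc_iff.2 hij)
  · rintro ⟨p, hp, rfl⟩ i j hij
    induction j using Fin.lastCases with
    | last => exact absurd hij (Fin.le_last i).not_gt
    | cast j =>
      induction i using Fin.lastCases with
      | last => exact parabolic_last_castSucc p j
      | cast i => exact hp i j (Fin.castSucc_lt_castSucc_iff.1 hij)

lemma card_upperTriangular_succ (n : ℕ) : Nat.card (upperTriangular F (n + 1)) =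
    Nat.card (corner F n).ker * Nat.card (upperTriangular F n) := by
  rw [upperTriangular_succ, Nat.card_image_of_injective (parabolic F n).subtype_injective,
    card_preimage_of_surjective corner_surjective]

variable {F} {n : ℕ}

lemma mem_heckeSet_iff {a : GA F n} :
    a ∈ heckeSet F n ↔ IsBiinvariant (upperTriangular F n) a :=
  ⟨fun ha _ h₁ _ h₂ g => ha _ _ g h₁ h₂, fun ha _ _ g h₁ h₂ => ha h₁ h₂ g⟩

lemma coe_permGL (ω : Equiv.Perm (Fin n)) : (permGL F ω).val = ω.permMatrix F := rfl

lemma exists_corner_eq_permGL {ω : Equiv.Perm (Fin n)} {ω' : Equiv.Perm (Fin (n + 1))}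
    (hlast : ω' (Fin.last n) = Fin.last n) (hω : ∀ i : Fin n, ω' i.castSucc = (ω i).castSucc) :
    ∃ p : parabolic F n, p.1 = permGL F ω' ∧ corner F n p = permGL F ω := by
  have mem : permGL F ω' ∈ parabolic F n := mem_parabolic.2 fun j => by
    simp [coe_permGL, Equiv.Perm.permMatrix, PEquiv.toMatrix_apply, hlast,
      j.castSucc_lt_last.ne']
  refine ⟨⟨_, mem⟩, rfl, ?_⟩
  ext i j
  simp [coe_permGL, Equiv.Perm.permMatrix, PEquiv.toMatrix_apply, hω]

end Borel

section ParabolicEmbedding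

variable {F} {n : ℕ}

lemma heckeS_eq_smul_setSum (ω : Equiv.Perm (Fin n)) :
    heckeS F ω = (Nat.card (upperTriangular F n) : ℂ)⁻¹ • setSum ℂ
      (DoubleCoset.doubleCoset (permGL F ω) (upperTriangular F n) (upperTriangular F n)) := by
  classical
  rw [heckeS, ← setSum_coe_finset, ← Fintype.card_subtype, ← Nat.card_eq_fintype_card]
  congr 2
  ext g
  simp [DoubleCoset.mem_doubleCoset, upperTriangular]

lemma coe_ExtSet (g : GLn F n) :
    (ExtSet F g : Set (GLn F (n + 1))) = (parabolic F n).subtype '' (corner F n ⁻¹' {g}) := by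
  ext h
  simp only [ExtSet, Finset.coe_filter, Finset.mem_univ, true_and, ← mem_parabolic]
  constructor
  · rintro ⟨hg, hh⟩
    exact ⟨⟨h, hh⟩, by ext i j; exact hg i j, rfl⟩
  · rintro ⟨p, rfl, rfl⟩
    exact ⟨fun _ _ => rfl, p.2⟩

lemma paraEmb_single_one (g : GLn F n) : paraEmb F n (MonoidAlgebra.single g 1) =
    (Nat.card (corner F n).ker : ℂ)⁻¹ • setSum ℂ (ExtSet F g : Set (GLn F (n + 1))) := by
  have card_ker : (Nat.card (corner F n).ker : ℂ) =
      ((Fintype.card F : ℂ) - 1) * (Fintype.card F : ℂ) ^ n := by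
    rw [card_ker_corner, Nat.card_units, Nat.card_eq_fintype_card]
    push_cast [Nat.cast_sub Fintype.card_pos]
    ring
  rw [card_ker, setSum_coe_finset]
  simp [paraEmb]

lemma paraEmb_apply (a : GA F n) : paraEmb F n a =
    MonoidAlgebra.mapDomain (parabolic F n).subtype (inflation ℂ (corner F n) a) := by
  suffices h : paraEmb F n = MonoidAlgebra.mapDomainLinearMap ℂ ℂ (parabolic F n).subtype ∘ₗ
      inflation ℂ (corner F n) from LinearMap.congr_fun h a
  refine MonoidAlgebra.lhom_ext' fun g => LinearMap.ext_ring ?_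
  change paraEmb F n (MonoidAlgebra.single g 1) = MonoidAlgebra.mapDomain (parabolic F n).subtype
    (inflation ℂ (corner F n) (MonoidAlgebra.single g 1))
  rw [paraEmb_single_one, coe_ExtSet, ← setSum_singleton, inflation_setSum,
    MonoidAlgebra.mapDomain_smul, mapDomain_setSum (parabolic F n).subtype_injective]

lemma paraEmb_heckeS {ω : Equiv.Perm (Fin n)} {ω' : Equiv.Perm (Fin (n + 1))}
    (hlast : ω' (Fin.last n) = Fin.last n) (hω : ∀ i : Fin n, ω' i.castSucc = (ω i).castSucc) :
    paraEmb F n (heckeS F ω) = heckeS F ω' := by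
  obtain ⟨p, hp, hcorner⟩ := exists_corner_eq_permGL (F := F) hlast hω
  set B := upperTriangular F n
  set B' := upperTriangular F (n + 1)
  have image_preimage_doubleCoset : (parabolic F n).subtype ''
      (corner F n ⁻¹' DoubleCoset.doubleCoset (permGL F ω) B B) =
        DoubleCoset.doubleCoset (permGL F ω') B' B' := by
    rw [← hcorner, preimage_doubleCoset corner_surjective, image_doubleCoset,
      ← upperTriangular_succ, Subgroup.subtype_apply, hp]
  rw [heckeS_eq_smul_setSum, map_smul, paraEmb_apply, inflation_setSum,
    MonoidAlgebra.mapDomain_smul, mapDomain_setSum (parabolic F n).subtype_injective,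
    image_preimage_doubleCoset, heckeS_eq_smul_setSum, smul_smul, card_upperTriangular_succ,
    Nat.cast_mul, mul_inv_rev]

lemma paraEmb_mem_heckeSet {a : GA F n} (ha : a ∈ heckeSet F n) :
    paraEmb F n a ∈ heckeSet F (n + 1) := by
  rw [mem_heckeSet_iff] at ha ⊢
  rw [paraEmb_apply, upperTriangular_succ]
  exact (ha.inflation (corner F n)).mapDomain (parabolic F n).subtype_injective

lemma paraEmb_mul (a b : GA F n) :
    paraEmb F n (a * b) = paraEmb F n a * paraEmb F n b := by
  simp only [paraEmb_apply, inflation_mul corner_surjective, MonoidAlgebra.mapDomain_mul]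

lemma paraEmb_injective : Function.Injective (paraEmb F n) := by
  have := (MonoidAlgebra.mapDomain_injective (parabolic F n).subtype_injective).comp
    (inflation_injective (k := ℂ) corner_surjective)
  simpa only [Function.Injective, Function.comp_apply, ← paraEmb_apply] using this

end ParabolicEmbedding

theorem paraEmb_restricts_to_hecke_general (n : ℕ) :
    (∀ (ω : Equiv.Perm (Fin n)) (ω' : Equiv.Perm (Fin (n + 1))),
      ω' (Fin.last n) = Fin.last n → (∀ i : Fin n, ω' i.castSucc = (ω i).castSucc) →
      paraEmb F n (heckeS F ω) = heckeS F ω') ∧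
    (∀ a ∈ heckeSet F n, paraEmb F n a ∈ heckeSet F (n + 1)) ∧
    (∀ a b, paraEmb F n (a * b) = paraEmb F n a * paraEmb F n b) ∧
    Function.Injective (paraEmb F n) :=
  ⟨fun _ _ hlast hω => paraEmb_heckeS hlast hω, fun _ => paraEmb_mem_heckeSet,
    paraEmb_mul, paraEmb_injective⟩

/-- **Proposition 2.17** (the parabolic embeddings restrict to the standard embeddings of
Iwahori–Hecke algebras): `i_n(s_ω) = s_{ω'}`, where `ω' ∈ S_{n+1}` fixes `n+1` and agrees
with `ω` on `{1,...,n}`; consequently `i_n` maps `H_q(n)` into `H_q(n+1)` and restricts to a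
unital algebra embedding of Hecke algebras. -/
theorem paraEmb_restricts_to_hecke (n : ℕ) :
    (∀ (ω : Equiv.Perm (Fin n)) (ω' : Equiv.Perm (Fin (n + 1))),
      ω' (Fin.last n) = Fin.last n → (∀ i : Fin n, ω' i.castSucc = (ω i).castSucc) →
      paraEmb F n (heckeS F ω) = heckeS F ω') ∧
    (∀ a ∈ heckeSet F n, paraEmb F n a ∈ heckeSet F (n + 1)) ∧
    (∀ a ∈ heckeSet F n, ∀ b ∈ heckeSet F n,
      paraEmb F n (a * b) = paraEmb F n a * paraEmb F n b) ∧
    Set.InjOn (paraEmb F n) (heckeSet F n) := by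
  obtain ⟨hs, hmem, hmul, hinj⟩ := paraEmb_restricts_to_hecke_general F n
  exact ⟨hs, hmem, fun a _ b _ => hmul a b, hinj.injOn⟩
end
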